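/- Let X be a locally compact Hausdorff space and let k be a bounded symmetric positive definite kernel on X with k(·,x) ∈ C_0(X) for all x ∈ X, with RKHS H. Then k is c0-universal if and only if ∫_X ∫_X k(x,y) dμ(x) dμ(y) > 0 for every nonzero μ ∈ M_b(X). -/

import Mathlib

open MeasureTheory Filter Topology RealInnerProductSpace
open scoped ZeroAtInfty

/-- Integral of a vector-valued function with respect to a finite signed measure,
defined via the Jordan decomposition. -/
noncomputable def svInt {X : Type*} [MeasurableSpace X] {E : Type*}
    [NormedAddCommGroup E] [NormedSpace ℝ E]
    (μ : MeasureTheory.SignedMeasure X) (f : X → E) : E :=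
  (∫ x, f x ∂μ.toJordanDecomposition.posPart) - ∫ x, f x ∂μ.toJordanDecomposition.negPart

/-!
The energy `∫∫ ⟪Φ x, Φ y⟫ dμ(x) dμ(y)` is the squared norm of the mean embedding of `μ`, the Riesz
representative of `f ↦ ∫ ⟪f, Φ x⟫ dμ(x)`. Hence it is positive exactly when `μ` does not annihilate
the functions `⟪f, Φ ·⟫`. By the Hahn–Banach theorem these functions are dense in `C₀(X, ℝ)` if and
only if no nonzero continuous functional annihilates them, and by the Riesz–Markov–Kakutani theorem
the continuous functionals on `C₀(X, ℝ)` are exactly the finite signed Radon measures.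
-/

open scoped NNReal CompactlySupported Pointwise

section Density

theorem denseRange_iff_forall_comp_eq_zero {𝕜 E F : Type*} [RCLike 𝕜] [AddCommGroup E]
    [TopologicalSpace E] [Module 𝕜 E] [NormedAddCommGroup F] [NormedSpace 𝕜 F] (J : E →L[𝕜] F) :
    DenseRange J ↔ ∀ φ : F →L[𝕜] 𝕜, φ ∘L J = 0 → φ = 0 := by
  refine ⟨fun hJ φ hφ => ContinuousLinearMap.coeFn_injective <|
    hJ.equalizer φ.continuous continuous_zero congr($hφ), fun h => ?_⟩
  set S := J.toLinearMap.range.topologicalClosure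
  have : IsClosed (S : Set F) := Submodule.isClosed_topologicalClosure _
  by_contra hJ
  obtain ⟨g, hg⟩ : ∃ g, S.mkQ g ≠ 0 := by
    contrapose! hJ
    intro g
    exact (Submodule.Quotient.mk_eq_zero S).1 (hJ g)
  obtain ⟨ψ, hψ⟩ := SeparatingDual.exists_ne_zero (R := 𝕜) hg
  have hψJ : (ψ ∘L S.mkQL) ∘L J = 0 := by
    ext f
    have : S.mkQ (J f) = 0 :=
      (Submodule.Quotient.mk_eq_zero S).2 (Submodule.le_topologicalClosure _ ⟨f, rfl⟩)
    simp [this]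
  exact hψ congr($(h _ hψJ) g)

end Density

section UniformNorm

variable {X E : Type*} [TopologicalSpace X] [NormedAddCommGroup E]

theorem norm_le_iff_forall_norm_apply_le {f : C₀(X, E)} {c : ℝ} (hc : 0 ≤ c) :
    ‖f‖ ≤ c ↔ ∀ x, ‖f x‖ ≤ c :=
  BoundedContinuousFunction.norm_le (f := f.toBCF) hc

theorem denseRange_iff_forall_norm_sub_le {ι : Type*} (J : ι → C₀(X, E)) :
    DenseRange J ↔ ∀ (g : C₀(X, E)) (ε : ℝ), 0 < ε → ∃ i, ∀ x, ‖J i x - g x‖ ≤ ε := by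
  simp only [DenseRange, Dense, mem_closure_iff_nhds_basis Metric.nhds_basis_closedBall,
    Set.exists_range_iff, mem_closedBall_iff_norm]
  exact forall₃_congr fun g ε hε => exists_congr fun i =>
    norm_le_iff_forall_norm_apply_le (f := J i - g) hε.le

theorem isCompact_setOf_le_norm (f : C₀(X, E)) {δ : ℝ} (hδ : 0 < δ) :
    IsCompact {x | δ ≤ ‖f x‖} := by
  have hlt : ∀ᶠ x in cocompact X, ‖f x‖ < δ :=
    (norm_zero (E := E) ▸ (zero_at_infty f).norm).eventually_lt_const hδ
  obtain ⟨K, hK, hKf⟩ := mem_cocompact.1 hlt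
  refine hK.of_isClosed_subset (isClosed_le continuous_const (by fun_prop)) ?_
  rintro x (hx : δ ≤ ‖f x‖)
  by_contra hxK
  exact hx.not_gt (hKf hxK)

variable [NormedSpace ℝ E]

variable (X E) in
/-- The inclusion of the compactly supported continuous functions into the continuous functions
vanishing at infinity. -/
def compactlySupportedToC0 : C_c(X, E) →ₗ[ℝ] C₀(X, E) where
  toFun f := f
  map_add' _ _ := rfl
  map_smul' _ _ := rfl

theorem compactlySupportedToC0_apply (f : C_c(X, E)) (x : X) :
    compactlySupportedToC0 X E f x = f x := rfl

theorem denseRange_compactlySupportedToC0 : DenseRange (compactlySupportedToC0 X E) := by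
  refine (denseRange_iff_forall_norm_sub_le _).2 fun f ε hε => ?_
  -- `g` shrinks the values of `f` radially by `ε`, so it vanishes where `‖f x‖ ≤ ε`.
  let g : X → E := fun x => (1 - ε / max ‖f x‖ ε) • f x
  have hmax (x : X) : 0 < max ‖f x‖ ε := lt_max_of_lt_right hε
  have hg : Continuous g := by
    have := fun x => (hmax x).ne'
    fun_prop (disch := assumption)
  have hsupp : HasCompactSupport g := by
    refine .intro' (isCompact_setOf_le_norm f hε) (isClosed_le continuous_const (by fun_prop))
      fun x (hx : ¬ε ≤ ‖f x‖) => ?_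
    simp only [g, max_eq_right (not_le.1 hx).le, div_self hε.ne', sub_self, zero_smul]
  refine ⟨⟨⟨g, hg⟩, hsupp⟩, fun x => ?_⟩
  calc ‖g x - f x‖ = ε * (‖f x‖ / max ‖f x‖ ε) := by
        simp only [g]
        rw [sub_smul, one_smul, sub_sub_cancel_left, norm_neg, norm_smul,
          Real.norm_of_nonneg (div_nonneg hε.le (hmax x).le), div_mul_eq_mul_div, mul_div_assoc]
    _ ≤ ε := mul_le_of_le_one_right hε.le (div_le_one_of_le₀ (le_max_left _ _) (hmax x).le)

end UniformNorm

section Cone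

variable {M : Type*} [AddCommMonoid M] [Module ℝ≥0 M]

/-- A nonnegative real linear functional on a cone, regarded as a linear map into `ℝ≥0`. -/
noncomputable def nnrealLinearMap (F : M →ₗ[ℝ≥0] ℝ) (hF : ∀ f, 0 ≤ F f) : M →ₗ[ℝ≥0] ℝ≥0 where
  toFun f := (F f).toNNReal
  map_add' f g := by rw [map_add, Real.toNNReal_add (hF f) (hF g)]
  map_smul' r f := by
    rw [map_smul, NNReal.smul_def, smul_eq_mul, Real.toNNReal_mul r.coe_nonneg, Real.toNNReal_coe]
    rfl

theorem coe_nnrealLinearMap_apply (F : M →ₗ[ℝ≥0] ℝ) (hF : ∀ f, 0 ≤ F f) (f : M) :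
    (nnrealLinearMap F hF f : ℝ) = F f :=
  Real.coe_toNNReal _ (hF f)

variable [PartialOrder M]

/-- The supremum of `L` over the order interval below `f`: the Riesz–Kantorovich formula for the
positive part of a linear functional `L` on a cone. It is meaningful only if `L` is bounded above on
that interval. -/
noncomputable def kantorovichSup (L : M →ₗ[ℝ≥0] ℝ) (f : M) : ℝ :=
  sSup (L '' Set.Iic f)

theorem le_kantorovichSup {L : M →ₗ[ℝ≥0] ℝ} {f g : M} (hL : BddAbove (L '' Set.Iic f))
    (hg : g ≤ f) : L g ≤ kantorovichSup L f :=
  le_csSup hL (Set.mem_image_of_mem L hg)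

theorem kantorovichSup_le {L : M →ₗ[ℝ≥0] ℝ} {f : M} {c : ℝ} (h : ∀ g ≤ f, L g ≤ c) :
    kantorovichSup L f ≤ c :=
  csSup_le (Set.nonempty_Iic.image L) (Set.forall_mem_image.2 h)

variable [CanonicallyOrderedAdd M]

theorem smul_Iic_subset_Iic_smul (r : ℝ≥0) (f : M) : r • Set.Iic f ⊆ Set.Iic (r • f) := by
  rintro _ ⟨g, hg, rfl⟩
  obtain ⟨h, rfl⟩ := exists_add_of_le (Set.mem_Iic.1 hg)
  simpa only [Set.mem_Iic, smul_add] using le_self_add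

theorem Iic_smul_eq_smul_Iic {r : ℝ≥0} (hr : r ≠ 0) (f : M) :
    Set.Iic (r • f) = r • Set.Iic f := by
  refine Set.Subset.antisymm ?_ (smul_Iic_subset_Iic_smul r f)
  rw [Set.subset_smul_set_iff₀ hr]
  simpa only [inv_smul_smul₀ hr] using smul_Iic_subset_Iic_smul r⁻¹ (r • f)

theorem kantorovichSup_smul (L : M →ₗ[ℝ≥0] ℝ) (r : ℝ≥0) (f : M) :
    kantorovichSup L (r • f) = r • kantorovichSup L f := by
  obtain rfl | hr := eq_or_ne r 0
  · have : Set.Iic (0 : M) = {0} := Set.eq_singleton_iff_unique_mem.2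
      ⟨Set.self_mem_Iic, fun _ => nonpos_iff_eq_zero.1⟩
    simp [kantorovichSup, this]
  · rw [kantorovichSup, Iic_smul_eq_smul_Iic hr, image_smul_set]
    exact Real.sSup_smul_of_nonneg r.2 _

end Cone

section LatticeCone

variable {M : Type*} [AddCommMonoid M] [SemilatticeInf M] [IsOrderedCancelAddMonoid M]
  [CanonicallyOrderedAdd M]

theorem inf_add_distrib (f g h : M) : f ⊓ g + h = (f + h) ⊓ (g + h) := by
  refine le_antisymm (le_inf (by gcongr; exact inf_le_left) (by gcongr; exact inf_le_right)) ?_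
  obtain ⟨e, he⟩ := exists_add_of_le (le_inf le_add_self le_add_self : h ≤ (f + h) ⊓ (g + h))
  rw [he, add_comm h e]
  have hef : e + h ≤ f + h := add_comm h e ▸ he ▸ inf_le_left
  have heg : e + h ≤ g + h := add_comm h e ▸ he ▸ inf_le_right
  gcongr
  exact le_inf (le_of_add_le_add_right hef) (le_of_add_le_add_right heg)

theorem exists_le_exists_le_add_eq_of_le_add {g f₁ f₂ : M} (hg : g ≤ f₁ + f₂) :
    ∃ g₁ ≤ f₁, ∃ g₂ ≤ f₂, g₁ + g₂ = g := by
  obtain ⟨g₂, hg₂⟩ := exists_add_of_le (inf_le_left : g ⊓ f₁ ≤ g)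
  refine ⟨g ⊓ f₁, inf_le_right, g₂, le_of_add_le_add_left (a := g ⊓ f₁) ?_, hg₂.symm⟩
  calc g ⊓ f₁ + g₂ = g := hg₂.symm
    _ ≤ (g + f₂) ⊓ (f₁ + f₂) := le_inf le_self_add hg
    _ = g ⊓ f₁ + f₂ := (inf_add_distrib g f₁ f₂).symm

theorem Iic_add_eq_Iic_add_Iic (f₁ f₂ : M) : Set.Iic (f₁ + f₂) = Set.Iic f₁ + Set.Iic f₂ :=
  Set.Subset.antisymm (fun _ hg => Set.mem_add.2 (exists_le_exists_le_add_eq_of_le_add hg))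
    (Set.Iic_add_Iic_subset f₁ f₂)

variable [Module ℝ≥0 M]

/-- The positive part of a linear functional on a lattice cone that is bounded above on order
intervals. -/
noncomputable def kantorovichLinearMap (L : M →ₗ[ℝ≥0] ℝ) (hL : ∀ f, BddAbove (L '' Set.Iic f)) :
    M →ₗ[ℝ≥0] ℝ where
  toFun := kantorovichSup L
  map_add' f₁ f₂ := by
    simp only [kantorovichSup, Iic_add_eq_Iic_add_Iic, Set.image_add]
    exact csSup_add (Set.nonempty_Iic.image L) (hL f₁) (Set.nonempty_Iic.image L) (hL f₂)
  map_smul' := kantorovichSup_smul L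

theorem exists_nnreal_linearMap_sub_eq (L : M →ₗ[ℝ≥0] ℝ) (hL : ∀ f, BddAbove (L '' Set.Iic f)) :
    ∃ P Q : M →ₗ[ℝ≥0] ℝ≥0, (∀ f, (P f - Q f : ℝ) = L f) ∧
      ∀ f c, (∀ g ≤ f, |L g| ≤ c) → P f ≤ c ∧ Q f ≤ c := by
  set S := kantorovichLinearMap L hL
  have hS (f : M) : 0 ≤ S f := (map_zero L).ge.trans (le_kantorovichSup (hL f) zero_le)
  have hSL (f : M) : 0 ≤ (S - L) f := sub_nonneg.2 (le_kantorovichSup (hL f) le_rfl)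
  refine ⟨nnrealLinearMap S hS, nnrealLinearMap (S - L) hSL, fun f => ?_, fun f c hc => ?_⟩ <;>
    simp only [coe_nnrealLinearMap_apply, LinearMap.sub_apply]
  · exact sub_sub_cancel _ _
  refine ⟨kantorovichSup_le fun g hg => le_of_abs_le (hc g hg),
    sub_le_iff_le_add.2 (kantorovichSup_le fun g hg => ?_)⟩
  obtain ⟨e, rfl⟩ := exists_add_of_le hg
  have : -c ≤ L e := neg_le_of_abs_le (hc e le_add_self)
  rw [map_add]
  linarith

end LatticeCone

section FunctionalsOnC0

variable {X : Type*} [TopologicalSpace X]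

instance : CanonicallyOrderedAdd C_c(X, ℝ≥0) where
  exists_add_of_le h := (CompactlySupportedContinuousMap.exists_add_of_le h).imp fun _ => Eq.symm
  le_self_add _ _ _ := le_self_add
  le_add_self _ _ _ := le_add_self

instance : IsOrderedCancelAddMonoid C_c(X, ℝ≥0) where
  le_of_add_le_add_left _ _ _ h x := le_of_add_le_add_left (h x)

/-- The restriction of a functional on `C₀(X, ℝ)` to the cone of nonnegative compactly supported
functions. -/
noncomputable def restrictNNReal (φ : C₀(X, ℝ) →L[ℝ] ℝ) : C_c(X, ℝ≥0) →ₗ[ℝ≥0] ℝ :=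
  (φ.toLinearMap ∘ₗ compactlySupportedToC0 X ℝ).restrictScalars ℝ≥0 ∘ₗ
    CompactlySupportedContinuousMap.toRealLinearMap

theorem restrictNNReal_apply (φ : C₀(X, ℝ) →L[ℝ] ℝ) (f : C_c(X, ℝ≥0)) :
    restrictNNReal φ f = φ (compactlySupportedToC0 X ℝ f.toReal) := rfl

theorem restrictNNReal_injective :
    Function.Injective (restrictNNReal : (C₀(X, ℝ) →L[ℝ] ℝ) → C_c(X, ℝ≥0) →ₗ[ℝ≥0] ℝ) := by
  intro φ ψ h
  refine ContinuousLinearMap.coeFn_injective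
    (denseRange_compactlySupportedToC0.equalizer φ.continuous ψ.continuous (funext fun f => ?_))
  have hnonneg (g : C_c(X, ℝ≥0)) : φ (compactlySupportedToC0 X ℝ g.toReal) =
      ψ (compactlySupportedToC0 X ℝ g.toReal) := congr($h g)
  rw [Function.comp_apply, Function.comp_apply, ← f.nnrealPart_sub_nnrealPart_neg]
  simp only [map_sub, hnonneg]

theorem abs_restrictNNReal_le (φ : C₀(X, ℝ) →L[ℝ] ℝ) {f : C_c(X, ℝ≥0)} {c : ℝ≥0}
    (hf : ∀ x, f x ≤ c) : |restrictNNReal φ f| ≤ ‖φ‖ * c := by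
  refine φ.le_of_opNorm_le_of_le le_rfl ((norm_le_iff_forall_norm_apply_le c.2).2 fun x => ?_)
  simpa [compactlySupportedToC0_apply] using hf x

theorem bddAbove_restrictNNReal_image_Iic (φ : C₀(X, ℝ) →L[ℝ] ℝ) (f : C_c(X, ℝ≥0)) :
    BddAbove (restrictNNReal φ '' Set.Iic f) := by
  obtain ⟨c, hc⟩ := (f.hasCompactSupport.isCompact_range f.continuous).bddAbove
  refine ⟨‖φ‖ * c, Set.forall_mem_image.2 fun g hg => ?_⟩
  exact le_of_abs_le (abs_restrictNNReal_le φ fun x => (hg x).trans (hc ⟨x, rfl⟩))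

theorem exists_nnreal_linearMap_sub_eq_restrictNNReal (φ : C₀(X, ℝ) →L[ℝ] ℝ) :
    ∃ P Q : C_c(X, ℝ≥0) →ₗ[ℝ≥0] ℝ≥0, (∀ f, (P f - Q f : ℝ) = restrictNNReal φ f) ∧
      ∀ f : C_c(X, ℝ≥0), (∀ x, f x ≤ 1) → P f ≤ ‖φ‖₊ ∧ Q f ≤ ‖φ‖₊ := by
  obtain ⟨P, Q, hPQ, hle⟩ := exists_nnreal_linearMap_sub_eq (restrictNNReal φ)
    (bddAbove_restrictNNReal_image_Iic φ)
  refine ⟨P, Q, hPQ, fun f hf => hle f ‖φ‖ fun g hg => ?_⟩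
  simpa using abs_restrictNNReal_le φ fun x => (hg x).trans (hf x)

end FunctionalsOnC0

section RadonMeasures

theorem measure_add_sub_comm {X : Type*} [MeasurableSpace X] (μ ν : Measure X) [IsFiniteMeasure μ]
    [IsFiniteMeasure ν] : μ + (ν - μ) = ν + (μ - ν) := by
  rw [← Measure.toSignedMeasure_eq_toSignedMeasure_iff, Measure.toSignedMeasure_add,
    Measure.toSignedMeasure_add]
  have := Measure.sub_toSignedMeasure_eq_toSignedMeasure_sub (μ := μ) (ν := ν)
  rwa [sub_eq_sub_iff_add_eq_add, add_comm (Measure.toSignedMeasure (μ - ν))] at this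

theorem totalVariation_toSignedMeasure_sub_le {X : Type*} [MeasurableSpace X] (μ ν : Measure X)
    [IsFiniteMeasure μ] [IsFiniteMeasure ν] :
    (μ.toSignedMeasure - ν.toSignedMeasure).totalVariation ≤ μ + ν := by
  rw [SignedMeasure.totalVariation, Measure.toJordanDecomposition_toSignedMeasure_sub]
  exact add_le_add Measure.sub_le Measure.sub_le

variable {X : Type*} [TopologicalSpace X] [T2Space X] [MeasurableSpace X] [BorelSpace X]

theorem innerRegular_of_le {μ ν : Measure X} [IsFiniteMeasure μ] [μ.InnerRegular] (h : ν ≤ μ) :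
    ν.InnerRegular := by
  refine ⟨fun A hA r hr => ?_⟩
  have : IsFiniteMeasure ν := isFiniteMeasure_of_le μ h
  obtain ⟨K, hKA, hK, hlt⟩ :=
    hA.exists_isCompact_sdiff_lt (measure_ne_top μ A) (tsub_pos_of_lt hr).ne'
  have hA_le : ν A ≤ ν K + ν (A \ K) := (measure_mono (by simp)).trans (measure_union_le _ _)
  refine ⟨K, hKA, hK, ?_⟩
  calc r < ν A - μ (A \ K) := lt_tsub_comm.1 hlt
    _ ≤ ν A - ν (A \ K) := tsub_le_tsub_left (h _) _
    _ ≤ ν K := tsub_le_iff_right.2 hA_le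

theorem rieszMeasure_univ_le [LocallyCompactSpace X] {P : C_c(X, ℝ≥0) →ₗ[ℝ≥0] ℝ≥0} {c : ℝ≥0}
    (hP : ∀ f : C_c(X, ℝ≥0), (∀ x, f x ≤ 1) → P f ≤ c) :
    NNRealRMK.rieszMeasure P Set.univ ≤ c := by
  rw [isOpen_univ.measure_eq_iSup_isCompact]
  refine iSup₂_le fun K _ => iSup_le fun hK => ?_
  obtain ⟨f, hfK, -, hfc, hf⟩ :=
    exists_continuous_one_zero_of_isCompact hK isClosed_empty (Set.disjoint_empty K)
  let g : C_c(X, ℝ≥0) := CompactlySupportedContinuousMap.nnrealPart ⟨f, hfc⟩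
  have hgK : ∀ x ∈ K, (1 : ENNReal) ≤ g x := fun x hx => by
    have : f x = 1 := hfK hx
    simp [g, this]
  calc NNRealRMK.rieszMeasure P K = ∫⁻ _ in K, 1 ∂(NNRealRMK.rieszMeasure P) := by simp
    _ ≤ ∫⁻ x in K, g x ∂(NNRealRMK.rieszMeasure P) := setLIntegral_mono' hK.measurableSet hgK
    _ ≤ ∫⁻ x, g x ∂(NNRealRMK.rieszMeasure P) := setLIntegral_le_lintegral _ _
    _ = P g := NNRealRMK.lintegral_rieszMeasure P g
    _ ≤ c := ENNReal.coe_le_coe.2 (hP g fun x => by simpa [g] using (hf x).2)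

end RadonMeasures

section RieszRepresentation

variable {X : Type*} [TopologicalSpace X] [MeasurableSpace X] [BorelSpace X]

/-- Integration against a finite measure, as a continuous functional on `C₀(X, ℝ)`. -/
noncomputable def integralC0 (μ : Measure X) [IsFiniteMeasure μ] : C₀(X, ℝ) →L[ℝ] ℝ :=
  LinearMap.mkContinuous
    { toFun := fun f => ∫ x, f x ∂μ
      map_add' := fun f g => integral_add (f.toBCF.integrable μ) (g.toBCF.integrable μ)
      map_smul' := fun r f => integral_const_mul r f }
    (μ.real Set.univ) fun f => by
      rw [mul_comm]
      exact norm_integral_le_of_norm_le_const (ae_of_all _ f.toBCF.norm_coe_le_norm)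

theorem integralC0_apply (μ : Measure X) [IsFiniteMeasure μ] (f : C₀(X, ℝ)) :
    integralC0 μ f = ∫ x, f x ∂μ := rfl

theorem integralC0_add (μ ν : Measure X) [IsFiniteMeasure μ] [IsFiniteMeasure ν] :
    integralC0 (μ + ν) = integralC0 μ + integralC0 ν := by
  ext f
  exact integral_add_measure (f.toBCF.integrable μ) (f.toBCF.integrable ν)

/-- Integration against a finite signed measure, as a continuous functional on `C₀(X, ℝ)`. -/
noncomputable def svIntC0 (μ : SignedMeasure X) : C₀(X, ℝ) →L[ℝ] ℝ :=
  integralC0 μ.toJordanDecomposition.posPart - integralC0 μ.toJordanDecomposition.negPart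

theorem svIntC0_apply (μ : SignedMeasure X) (f : C₀(X, ℝ)) : svIntC0 μ f = svInt μ f := rfl

theorem svIntC0_zero : svIntC0 (0 : SignedMeasure X) = 0 := by
  ext f
  simp [svIntC0_apply, svInt, SignedMeasure.toJordanDecomposition_zero]

theorem svIntC0_toSignedMeasure_sub (μ ν : Measure X) [IsFiniteMeasure μ] [IsFiniteMeasure ν] :
    svIntC0 (μ.toSignedMeasure - ν.toSignedMeasure) = integralC0 μ - integralC0 ν := by
  have hjordan : svIntC0 (μ.toSignedMeasure - ν.toSignedMeasure) =
      integralC0 (μ - ν) - integralC0 (ν - μ) := by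
    simp only [svIntC0, Measure.toJordanDecomposition_toSignedMeasure_sub,
      Measure.jordanDecompositionOfToSignedMeasureSub_posPart,
      Measure.jordanDecompositionOfToSignedMeasureSub_negPart]
  have hadd : integralC0 μ + integralC0 (ν - μ) = integralC0 ν + integralC0 (μ - ν) := by
    simp only [← integralC0_add, measure_add_sub_comm μ ν]
  ext f
  have hf : integralC0 μ f + integralC0 (ν - μ) f = integralC0 ν f + integralC0 (μ - ν) f :=
    congr($hadd f)
  simp only [hjordan, sub_apply]
  linarith

variable [T2Space X] [LocallyCompactSpace X]

theorem svIntC0_eq_zero_iff {μ : SignedMeasure X} (hμ : μ.totalVariation.InnerRegular) :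
    svIntC0 μ = 0 ↔ μ = 0 := by
  refine ⟨fun h => ?_, fun h => h ▸ svIntC0_zero⟩
  have hpos : μ.toJordanDecomposition.posPart.InnerRegular :=
    innerRegular_of_le (μ := μ.totalVariation) (Measure.le_add_right le_rfl)
  have hneg : μ.toJordanDecomposition.negPart.InnerRegular :=
    innerRegular_of_le (μ := μ.totalVariation) (Measure.le_add_left le_rfl)
  have heq : μ.toJordanDecomposition.posPart = μ.toJordanDecomposition.negPart :=
    Measure.ext_of_integral_eq_on_compactlySupported fun f =>
      sub_eq_zero.1 congr($h (compactlySupportedToC0 X ℝ f))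
  rw [← μ.toSignedMeasure_toJordanDecomposition, JordanDecomposition.toSignedMeasure, sub_eq_zero]
  exact Measure.toSignedMeasure_congr heq

theorem exists_innerRegular_svIntC0_eq (φ : C₀(X, ℝ) →L[ℝ] ℝ) :
    ∃ μ : SignedMeasure X, μ.totalVariation.InnerRegular ∧ svIntC0 μ = φ := by
  obtain ⟨P, Q, hPQ, hle⟩ := exists_nnreal_linearMap_sub_eq_restrictNNReal φ
  have : IsFiniteMeasure (NNRealRMK.rieszMeasure P) :=
    ⟨(rieszMeasure_univ_le fun f hf => (hle f hf).1).trans_lt ENNReal.coe_lt_top⟩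
  have : IsFiniteMeasure (NNRealRMK.rieszMeasure Q) :=
    ⟨(rieszMeasure_univ_le fun f hf => (hle f hf).2).trans_lt ENNReal.coe_lt_top⟩
  refine ⟨_, innerRegular_of_le (totalVariation_toSignedMeasure_sub_le
    (NNRealRMK.rieszMeasure P) (NNRealRMK.rieszMeasure Q)), ?_⟩
  rw [svIntC0_toSignedMeasure_sub]
  refine restrictNNReal_injective (LinearMap.ext fun f => ?_)
  rw [← hPQ]
  simp [restrictNNReal_apply, integralC0_apply, compactlySupportedToC0_apply]

theorem denseRange_iff_forall_svIntC0_comp_ne_zero {E : Type*} [AddCommGroup E]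
    [TopologicalSpace E] [Module ℝ E] (J : E →L[ℝ] C₀(X, ℝ)) :
    DenseRange J ↔ ∀ μ : SignedMeasure X, μ.totalVariation.InnerRegular → μ ≠ 0 →
      svIntC0 μ ∘L J ≠ 0 := by
  rw [denseRange_iff_forall_comp_eq_zero]
  refine ⟨fun h μ hμ hne hJ => hne ((svIntC0_eq_zero_iff hμ).1 (h _ hJ)), fun h φ hφ => ?_⟩
  obtain ⟨μ, hμ, rfl⟩ := exists_innerRegular_svIntC0_eq φ
  exact (svIntC0_eq_zero_iff hμ).2 (of_not_not fun hne => h μ hμ hne hφ)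

end RieszRepresentation

section FeatureMap

variable {X : Type*} [TopologicalSpace X] {H : Type*} [NormedAddCommGroup H]
  [InnerProductSpace ℝ H]

/-- A feature map of a bounded kernel on `X` whose sections vanish at infinity. -/
structure IsC0FeatureMap (Φ : X → H) : Prop where
  exists_norm_le : ∃ C, ∀ x, ‖Φ x‖ ≤ C
  continuous_inner : ∀ x, Continuous fun y => ⟪Φ x, Φ y⟫
  tendsto_inner : ∀ x, Tendsto (fun y => ⟪Φ x, Φ y⟫) (cocompact X) (𝓝 0)

/-- The vectors `f` whose associated function `⟪f, Φ ·⟫` is continuous and vanishes at infinity. -/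
def c0Submodule (Φ : X → H) : Submodule ℝ H where
  carrier := {f | Continuous (fun x => ⟪f, Φ x⟫) ∧ Tendsto (fun x => ⟪f, Φ x⟫) (cocompact X) (𝓝 0)}
  zero_mem' := by simpa using ⟨continuous_const, tendsto_const_nhds⟩
  add_mem' hf hg := by
    simp only [Set.mem_ofPred_eq, inner_add_left]
    exact ⟨hf.1.add hg.1, add_zero (0 : ℝ) ▸ hf.2.add hg.2⟩
  smul_mem' r f hf := by
    simp only [Set.mem_ofPred_eq, real_inner_smul_left]
    exact ⟨hf.1.const_mul r, mul_zero r ▸ hf.2.const_mul r⟩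

theorem mem_c0Submodule {Φ : X → H} {f : H} : f ∈ c0Submodule Φ ↔
    Continuous (fun x => ⟪f, Φ x⟫) ∧ Tendsto (fun x => ⟪f, Φ x⟫) (cocompact X) (𝓝 0) := Iff.rfl

theorem tendstoUniformly_inner {ι : Type*} {Φ : ι → H} (hΦ : ∃ C, ∀ x, ‖Φ x‖ ≤ C) (f : H) :
    TendstoUniformly (fun g x => ⟪g, Φ x⟫) (fun x => ⟪f, Φ x⟫) (𝓝 f) := by
  obtain ⟨C, hC⟩ := hΦ
  have hlim : Tendsto (fun g => ‖f - g‖ * C) (𝓝 f) (𝓝 0) := by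
    have : Continuous fun g => ‖f - g‖ * C := by fun_prop
    simpa using this.tendsto f
  refine Metric.tendstoUniformly_iff.2 fun ε hε => ?_
  filter_upwards [hlim.eventually_lt_const hε] with g hg x
  calc dist ⟪f, Φ x⟫ ⟪g, Φ x⟫ = ‖⟪f - g, Φ x⟫‖ := by rw [dist_eq_norm, inner_sub_left]
    _ ≤ ‖f - g‖ * ‖Φ x‖ := norm_inner_le_norm _ _
    _ ≤ ‖f - g‖ * C := by gcongr; exact hC x
    _ < ε := hg

theorem isClosed_c0Submodule {Φ : X → H} (hΦ : ∃ C, ∀ x, ‖Φ x‖ ≤ C) :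
    IsClosed (c0Submodule Φ : Set H) := by
  refine isClosed_of_closure_subset fun f hf => ?_
  have : (𝓝[(c0Submodule Φ : Set H)] f).NeBot := mem_closure_iff_nhdsWithin_neBot.1 hf
  have hunif : TendstoUniformly (fun g x => ⟪g, Φ x⟫) (fun x => ⟪f, Φ x⟫)
      (𝓝[(c0Submodule Φ : Set H)] f) :=
    fun u hu => (tendstoUniformly_inner hΦ f u hu).filter_mono nhdsWithin_le_nhds
  have hmem : ∀ᶠ g in 𝓝[(c0Submodule Φ : Set H)] f, g ∈ c0Submodule Φ := self_mem_nhdsWithin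
  exact ⟨hunif.continuous (hmem.mono fun g hg => hg.1).frequently,
    hunif.tendsto_of_eventually_tendsto (hmem.mono fun g hg => hg.2) tendsto_const_nhds⟩

namespace IsC0FeatureMap

variable {Φ : X → H}

theorem of_inner_self_le (hbdd : ∃ C : ℝ, ∀ x, ⟪Φ x, Φ x⟫ ≤ C)
    (hC0 : ∀ x, Continuous (fun y => ⟪Φ y, Φ x⟫) ∧
      Tendsto (fun y => ⟪Φ y, Φ x⟫) (cocompact X) (𝓝 0)) : IsC0FeatureMap Φ where
  exists_norm_le := by
    obtain ⟨C, hC⟩ := hbdd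
    refine ⟨√C, fun x => Real.le_sqrt_of_sq_le ?_⟩
    rw [← real_inner_self_eq_norm_sq]
    exact hC x
  continuous_inner x := (hC0 x).1.congr fun y => real_inner_comm (Φ x) (Φ y)
  tendsto_inner x := (hC0 x).2.congr fun y => real_inner_comm (Φ x) (Φ y)

open UniformSpace.Completion in
theorem coe_completion (hΦ : IsC0FeatureMap Φ) :
    IsC0FeatureMap fun x => (Φ x : UniformSpace.Completion H) where
  exists_norm_le := by simpa only [norm_coe] using hΦ.exists_norm_le
  continuous_inner := by simpa only [inner_coe] using hΦ.continuous_inner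
  tendsto_inner := by simpa only [inner_coe] using hΦ.tendsto_inner

variable [CompleteSpace H] (hΦ : IsC0FeatureMap Φ)

include hΦ in
theorem c0Submodule_eq_top : c0Submodule Φ = ⊤ := by
  rw [← (isClosed_c0Submodule hΦ.exists_norm_le).submodule_topologicalClosure_eq,
    Submodule.topologicalClosure_eq_top_iff, Submodule.eq_bot_iff]
  intro f hf
  have hfΦ (x : X) : ⟪f, Φ x⟫ = 0 :=
    (Submodule.mem_orthogonal' _ f).1 hf _ ⟨hΦ.continuous_inner x, hΦ.tendsto_inner x⟩
  -- The function associated with `f` is zero, so `f` is orthogonal to itself.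
  have hf_mem : f ∈ c0Submodule Φ := by
    simpa only [mem_c0Submodule, hfΦ] using ⟨continuous_const, tendsto_const_nhds⟩
  exact inner_self_eq_zero.1 ((Submodule.mem_orthogonal _ f).1 hf f hf_mem)

/-- The map sending a vector `f` to the function `⟪f, Φ ·⟫`, which identifies `H` (up to the kernel
of this map) with the reproducing kernel Hilbert space inside `C₀(X, ℝ)`. -/
noncomputable def toC0 : H →L[ℝ] C₀(X, ℝ) :=
  have hmem (f : H) : f ∈ c0Submodule Φ := hΦ.c0Submodule_eq_top ▸ Submodule.mem_top
  LinearMap.mkContinuousOfExistsBound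
    { toFun := fun f => ⟨⟨fun x => ⟪f, Φ x⟫, (hmem f).1⟩, (hmem f).2⟩
      map_add' := fun f g => ZeroAtInftyContinuousMap.ext fun x => inner_add_left f g (Φ x)
      map_smul' := fun r f => ZeroAtInftyContinuousMap.ext fun x => real_inner_smul_left f (Φ x) r }
    (by
      obtain ⟨C, hC⟩ := hΦ.exists_norm_le
      refine ⟨|C|, fun f => (norm_le_iff_forall_norm_apply_le (by positivity)).2 fun x => ?_⟩
      calc ‖⟪f, Φ x⟫‖ ≤ ‖f‖ * ‖Φ x‖ := norm_inner_le_norm _ _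
        _ ≤ |C| * ‖f‖ := by rw [mul_comm]; gcongr; exact (hC x).trans (le_abs_self C))

theorem toC0_apply (f : H) (x : X) : hΦ.toC0 f x = ⟪f, Φ x⟫ := rfl

/-- The mean embedding of a functional `φ` on `C₀(X, ℝ)` (in particular of a signed measure): the
Riesz representative of its pullback to `H`. -/
noncomputable def meanEmbedding (φ : C₀(X, ℝ) →L[ℝ] ℝ) : H :=
  (InnerProductSpace.toDual ℝ H).symm (φ ∘L hΦ.toC0)

theorem inner_meanEmbedding (φ : C₀(X, ℝ) →L[ℝ] ℝ) (f : H) :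
    ⟪hΦ.meanEmbedding φ, f⟫ = φ (hΦ.toC0 f) :=
  InnerProductSpace.toDual_symm_apply

theorem meanEmbedding_eq_zero_iff (φ : C₀(X, ℝ) →L[ℝ] ℝ) :
    hΦ.meanEmbedding φ = 0 ↔ φ ∘L hΦ.toC0 = 0 :=
  map_eq_zero_iff _ (LinearIsometryEquiv.injective _)

variable [MeasurableSpace X] [BorelSpace X] (μ : SignedMeasure X)

theorem svInt_svInt_inner :
    svInt μ (fun x => svInt μ fun y => ⟪Φ x, Φ y⟫) = ‖hΦ.meanEmbedding (svIntC0 μ)‖ ^ 2 := by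
  set m := hΦ.meanEmbedding (svIntC0 μ)
  have hm (x : X) : svInt μ (fun y => ⟪Φ x, Φ y⟫) = hΦ.toC0 m x :=
    calc svInt μ (fun y => ⟪Φ x, Φ y⟫) = svIntC0 μ (hΦ.toC0 (Φ x)) := rfl
      _ = ⟪m, Φ x⟫ := (hΦ.inner_meanEmbedding _ _).symm
      _ = hΦ.toC0 m x := (hΦ.toC0_apply m x).symm
  calc svInt μ (fun x => svInt μ fun y => ⟪Φ x, Φ y⟫) = svIntC0 μ (hΦ.toC0 m) := by
        simp only [hm, svIntC0_apply]
    _ = ⟪m, m⟫ := (hΦ.inner_meanEmbedding _ _).symm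
    _ = ‖m‖ ^ 2 := real_inner_self_eq_norm_sq m

theorem svInt_svInt_inner_pos_iff :
    0 < svInt μ (fun x => svInt μ fun y => ⟪Φ x, Φ y⟫) ↔ svIntC0 μ ∘L hΦ.toC0 ≠ 0 := by
  rw [hΦ.svInt_svInt_inner, ← (hΦ.meanEmbedding_eq_zero_iff _).ne, sq_pos_iff, norm_ne_zero_iff]

end IsC0FeatureMap

end FeatureMap

open UniformSpace.Completion in
theorem stmt5_general {X : Type*} [TopologicalSpace X] [T2Space X] [LocallyCompactSpace X]
    [MeasurableSpace X] [BorelSpace X] {H : Type*} [NormedAddCommGroup H] [InnerProductSpace ℝ H]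
    {Φ : X → H} (hΦ : IsC0FeatureMap Φ) :
    (∀ (g : C₀(X, ℝ)) (ε : ℝ), 0 < ε → ∃ f : H, ∀ x : X, |⟪f, Φ x⟫ - g x| ≤ ε) ↔
      ∀ μ : SignedMeasure X, μ.totalVariation.InnerRegular → μ ≠ 0 →
        0 < svInt μ (fun x => svInt μ (fun y => ⟪Φ x, Φ y⟫)) := by
  let J := hΦ.coe_completion.toC0
  have hJ (f : H) (x : X) : J f x = ⟪f, Φ x⟫ := inner_coe f (Φ x)
  calc (∀ (g : C₀(X, ℝ)) (ε : ℝ), 0 < ε → ∃ f : H, ∀ x : X, |⟪f, Φ x⟫ - g x| ≤ ε)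
      ↔ DenseRange (J ∘ ((↑) : H → UniformSpace.Completion H)) := by
        simp only [denseRange_iff_forall_norm_sub_le, Function.comp_apply, hJ, Real.norm_eq_abs]
    _ ↔ DenseRange J := ⟨DenseRange.of_comp, fun h => h.comp denseRange_coe J.continuous⟩
    _ ↔ ∀ μ : SignedMeasure X, μ.totalVariation.InnerRegular → μ ≠ 0 → svIntC0 μ ∘L J ≠ 0 :=
      denseRange_iff_forall_svIntC0_comp_ne_zero J
    _ ↔ _ := by simp only [J, ← hΦ.coe_completion.svInt_svInt_inner_pos_iff, inner_coe]

/-- Let `X` be a locally compact Hausdorff space and `k` a bounded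
symmetric positive definite kernel on `X` with `k(·,x) ∈ C₀(X)` for all `x`, with RKHS
`H`.  Then `k` is c₀-universal iff `∫∫ k(x,y) dμ(x) dμ(y) > 0` for every nonzero finite
signed Radon measure `μ` on `X`. -/
theorem stmt5
    {X : Type*} [TopologicalSpace X] [T2Space X] [LocallyCompactSpace X]
    [MeasurableSpace X] [BorelSpace X]
    (k : X → X → ℝ)
    (hkbdd : ∃ C : ℝ, ∀ x y : X, |k x y| ≤ C)
    (hkC0 : ∀ x : X, Continuous (fun y => k y x) ∧
      Tendsto (fun y => k y x) (cocompact X) (𝓝 0))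
    {H : Type*} [NormedAddCommGroup H] [InnerProductSpace ℝ H] [CompleteSpace H]
    (T : H →ₗ[ℝ] (X → ℝ)) (hT : Function.Injective T)
    (Φ : X → H)
    (hk : ∀ x y : X, k x y = ⟪Φ x, Φ y⟫)
    (hrepro : ∀ (f : H) (x : X), T f x = ⟪f, Φ x⟫) :
    (∀ (g : C₀(X, ℝ)) (ε : ℝ), 0 < ε → ∃ f : H, ∀ x : X, |T f x - g x| ≤ ε) ↔
      ∀ μ : MeasureTheory.SignedMeasure X, μ.totalVariation.InnerRegular → μ ≠ 0 →
        0 < svInt μ (fun x => svInt μ (fun y => k x y)) := by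
  obtain rfl : k = fun x y => ⟪Φ x, Φ y⟫ := funext₂ hk
  simpa only [hrepro] using
    stmt5_general (.of_inner_self_le (hkbdd.imp fun C hC x => le_of_abs_le (hC x x)) hkC0)
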